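/- Let t ≥ 1 be an integer and let G = P_3 □ K_t be the Cartesian product of the path on 3 vertices with the complete graph on t vertices. Then for every edge e joining two non-adjacent vertices of G, mp(G+e) ≥ 2t+1; in particular, G is (2t+1)-saturated. -/

import Mathlib

/-!
Write `G = P₃ □ Kₜ` as three cliques ("layers") of size `t`, the middle one having degree `t + 1`
and the two outer ones degree `t`. Along a path with non-decreasing degrees, an outer layer can
only be left for the middle layer, and the middle layer can never be left, so such a path meets at
most two layers and has at most `2t` vertices (`mp_grid_le`).

Adding an edge raises the degrees of its two ends by one (`gdeg_addEdge`). Up to symmetry there are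
two kinds of non-edges, and each yields a degree monotone path on `2t + 1` vertices.

* `(a, i)` and `(b, j)` in the two different outer layers (`le_mp_outer`): traverse layer `a`
  ending at `(a, i)`, cross the new edge to `(b, j)`, step to `(1, j)` and traverse the middle layer.
  The degrees are `t, …, t, t + 1, …, t + 1`.
* `(a, i)` in an outer layer and `(1, j)` with `i ≠ j` (`le_mp_middle`): traverse the other outer
  layer, step to the middle layer and traverse it, omitting `(1, j)` and ending at `(1, i)`, then
  step to `(a, i)` and cross the new edge to `(1, j)`.
  The degrees are `t, …, t, t + 1, …, t + 1, t + 2`.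
-/


open SimpleGraph

variable {V : Type*}

/-- The degree of a vertex `v`: the number of neighbours of `v`. -/
noncomputable def gdeg (G : SimpleGraph V) (v : V) : ℕ := (G.neighborSet v).ncard

/-- A walk is degree monotone if the sequence of degrees of the vertices in the
order in which they appear on the walk is monotone (non-decreasing or non-increasing). -/
def IsDegMonotone (G : SimpleGraph V) {u v : V} (p : G.Walk u v) : Prop :=
  (p.support.map (gdeg G)).Chain' (· ≤ ·) ∨ (p.support.map (gdeg G)).Chain' (· ≥ ·)

/-- `mp G` is the maximum number of vertices of a degree monotone path in `G`. -/
noncomputable def mp (G : SimpleGraph V) : ℕ :=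
  sSup {n | ∃ (u v : V) (p : G.Walk u v), p.IsPath ∧ IsDegMonotone G p ∧ p.support.length = n}

/-- The graph obtained from `G` by adding the edge `uv`. -/
def addEdge (G : SimpleGraph V) (u v : V) : SimpleGraph V :=
  G ⊔ fromEdgeSet {s(u, v)}

/-- `G` is saturated if adding any edge between non-adjacent vertices increases `mp`. -/
def Saturated (G : SimpleGraph V) : Prop :=
  ∀ u v : V, u ≠ v → ¬ G.Adj u v → mp G < mp (addEdge G u v)

/-- `G` is `k`-saturated if `mp G < k` and adding any edge between non-adjacent
vertices creates a degree monotone path on at least `k` vertices. -/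
def KSaturated (k : ℕ) (G : SimpleGraph V) : Prop :=
  mp G < k ∧ ∀ u v : V, u ≠ v → ¬ G.Adj u v → k ≤ mp (addEdge G u v)

/-- `hSat n k` is the minimum number of edges of a `k`-saturated graph on `n` vertices. -/
noncomputable def hSat (n k : ℕ) : ℕ :=
  sInf {m | ∃ G : SimpleGraph (Fin n), KSaturated k G ∧ G.edgeSet.ncard = m}

/-- `y` is a neighbour of `x` whose degree is at least that of `x`: a possible step of a path with
non-decreasing degrees. -/
def StepUp (G : SimpleGraph V) (x y : V) : Prop := G.Adj x y ∧ gdeg G x ≤ gdeg G y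

/-- The vertex counts of degree monotone paths are bounded, so the supremum in `mp` is not a junk
value and every path with non-decreasing degrees bounds `mp` from below. -/
lemma length_le_mp [Finite V] (G : SimpleGraph V) (l : List V) (hne : l ≠ []) (hl : l.Nodup)
    (hc : l.IsChain (StepUp G)) : l.length ≤ mp G := by
  have := Fintype.ofFinite V
  refine le_csSup ⟨Fintype.card V, ?_⟩ ?_
  · rintro n ⟨u, v, p, hp, -, rfl⟩
    exact hp.support_nodup.length_le_card
  · have hs : (Walk.ofSupport l hne (hc.imp fun _ _ h => h.1)).support = l := by simp
    refine ⟨_, _, Walk.ofSupport l hne (hc.imp fun _ _ h => h.1), ?_, Or.inl ?_, by rw [hs]⟩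
    · rw [Walk.isPath_def, hs]; exact hl
    · rw [hs]
      exact (List.isChain_map _).2 (hc.imp fun _ _ h => h.2)

/-- To bound `mp` from above it suffices to consider non-decreasing degrees, since a path with
non-increasing degrees may be reversed. -/
lemma mp_le_of [Nonempty V] (G : SimpleGraph V) (n : ℕ)
    (h : ∀ l : List V, l.Nodup → l.IsChain (StepUp G) → l.length ≤ n) : mp G ≤ n := by
  refine csSup_le ?_ ?_
  · obtain ⟨v⟩ := ‹Nonempty V›
    exact ⟨1, v, v, Walk.nil, by simp, Or.inl (List.isChain_singleton _), rfl⟩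
  · rintro _ ⟨u, v, p, hp, hm, rfl⟩
    have key : ∀ {u v : V} (p : G.Walk u v), p.IsPath →
        (p.support.map (gdeg G)).IsChain (· ≤ ·) → p.support.length ≤ n := by
      intro u v p hp hm
      refine h _ hp.support_nodup ?_
      have h1 := p.isChain_adj_support
      have h2 := (List.isChain_map _).1 hm
      rw [List.isChain_iff_getElem] at h1 h2 ⊢
      exact fun i hi => ⟨h1 i hi, h2 i hi⟩
    rcases hm with hm | hm
    · exact key p hp hm
    · have := key p.reverse hp.reverse (by
        rw [Walk.support_reverse, List.map_reverse]
        exact List.isChain_reverse.2 hm)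
      simpa using this

lemma addEdge_adj (G : SimpleGraph V) {u v x y : V} (huv : u ≠ v) :
    (addEdge G u v).Adj x y ↔ G.Adj x y ∨ (x = u ∧ y = v) ∨ (x = v ∧ y = u) := by
  simp only [addEdge, sup_adj, fromEdgeSet_adj, Set.mem_singleton_iff, Sym2.eq_iff]
  constructor
  · tauto
  · rintro (h | ⟨rfl, rfl⟩ | ⟨rfl, rfl⟩)
    · exact Or.inl h
    · exact Or.inr ⟨Or.inl ⟨rfl, rfl⟩, huv⟩
    · exact Or.inr ⟨Or.inr ⟨rfl, rfl⟩, huv.symm⟩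

lemma addEdge_comm (G : SimpleGraph V) (u v : V) : addEdge G u v = addEdge G v u := by
  simp [addEdge, Sym2.eq_swap]

lemma gdeg_addEdge [Finite V] [DecidableEq V] (G : SimpleGraph V) {u v : V} (huv : u ≠ v)
    (hn : ¬ G.Adj u v) (w : V) :
    gdeg (addEdge G u v) w = gdeg G w + if w = u ∨ w = v then 1 else 0 := by
  unfold gdeg
  by_cases hu : w = u
  · subst hu
    have : (addEdge G w v).neighborSet w = insert v (G.neighborSet w) := by
      ext y; simp [addEdge_adj G huv, huv]; tauto
    rw [this, Set.ncard_insert_of_notMem (by simpa using hn)]; simp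
  by_cases hv : w = v
  · subst hv
    have : (addEdge G u w).neighborSet w = insert u (G.neighborSet w) := by
      ext y; simp [addEdge_adj G huv, huv.symm]; tauto
    rw [this, Set.ncard_insert_of_notMem (by simpa [G.adj_comm] using hn)]; simp
  · have : (addEdge G u v).neighborSet w = G.neighborSet w := by
      ext y; simp [addEdge_adj G huv, hu, hv]
    rw [this]; simp [hu, hv]

/-- The graph `P₃ □ Kₜ`; the fibre of the first coordinate over `1` is its middle layer. -/
abbrev Grid (t : ℕ) : SimpleGraph (Fin 3 × Fin t) := pathGraph 3 □ (⊤ : SimpleGraph (Fin t))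

lemma pathGraph_three_adj (a b : Fin 3) :
    (pathGraph 3).Adj a b ↔ (a = 1 ∧ b ≠ 1) ∨ (a ≠ 1 ∧ b = 1) := by
  rw [pathGraph_adj]; revert a b; decide

lemma grid_adj {t : ℕ} (x y : Fin 3 × Fin t) : (Grid t).Adj x y ↔
    (((x.1 = 1 ∧ y.1 ≠ 1) ∨ (x.1 ≠ 1 ∧ y.1 = 1)) ∧ x.2 = y.2) ∨ (x.2 ≠ y.2 ∧ x.1 = y.1) := by
  simp [Grid, boxProd_adj, pathGraph_three_adj]

lemma gdeg_grid {t : ℕ} (x : Fin 3 × Fin t) :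
    gdeg (Grid t) x = if x.1 = 1 then t + 1 else t := by
  classical
  have ht : 0 < t := x.2.pos
  have h1 : (pathGraph 3).degree x.1 = if x.1 = 1 then 2 else 1 := by
    rw [← card_neighborFinset_eq_degree, neighborFinset_eq_filter]
    simp only [pathGraph_three_adj]
    generalize x.1 = a
    revert a; decide
  have h2 : gdeg (Grid t) x = (Grid t).degree x := by
    rw [gdeg, Set.ncard_eq_toFinset_card', ← card_neighborFinset_eq_degree]
    rfl
  rw [h2, degree_boxProd, h1, complete_graph_degree, Fintype.card_fin]
  split_ifs <;> omega

lemma mp_grid_le {t : ℕ} (ht : 1 ≤ t) : mp (Grid t) ≤ 2 * t := by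
  have : Nonempty (Fin 3 × Fin t) := ⟨(0, ⟨0, ht⟩)⟩
  refine mp_le_of _ _ fun l hl hc => ?_
  -- A single step keeps the layer or enters the middle one, and this relation is transitive.
  let R : Fin 3 × Fin t → Fin 3 × Fin t → Prop := fun x y => y.1 = x.1 ∨ y.1 = 1
  have : Trans R R R := ⟨by intro x y z; simp only [R]; grind⟩
  have hR : l.IsChain R := hc.imp fun x y ⟨h, hd⟩ => by
    rw [grid_adj] at h
    rw [gdeg_grid, gdeg_grid] at hd
    simp only [R]
    split_ifs at hd <;> omega
  have hp := List.isChain_iff_pairwise.1 hR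
  cases l with
  | nil => simp
  | cons x l =>
    have hsub : (x :: l).toFinset ⊆ ({x.1, 1} : Finset (Fin 3)) ×ˢ (Finset.univ : Finset (Fin t)) := by
      intro y hy
      have := (List.pairwise_cons.1 hp).1 y
      simp only [List.mem_toFinset, List.mem_cons] at hy
      simp only [Finset.mem_product, Finset.mem_insert, Finset.mem_singleton, Finset.mem_univ,
        and_true]
      rcases hy with rfl | hy
      · exact Or.inl rfl
      · exact this hy
    have h := Finset.card_le_card hsub
    rw [List.toFinset_card_of_nodup hl, Finset.card_product, Finset.card_univ,
      Fintype.card_fin] at h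
    exact h.trans (Nat.mul_le_mul_right t Finset.card_le_two)

lemma le_mp_outer {t : ℕ} {a b : Fin 3} (ha : a ≠ 1) (hb : b ≠ 1) (hab : a ≠ b) (i j : Fin t) :
    2 * t + 1 ≤ mp (addEdge (Grid t) (a, i) (b, j)) := by
  have hne : ((a, i) : Fin 3 × Fin t) ≠ (b, j) := by simp [hab]
  have hn : ¬ (Grid t).Adj (a, i) (b, j) := by simp [pathGraph_three_adj, ha, hb, hab]
  have ht : 0 < t := i.pos
  set m := (Finset.univ.erase i).toList with hm
  set k := (Finset.univ.erase j).toList with hk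
  have hm1 : m.Nodup := Finset.nodup_toList _
  have hk1 : k.Nodup := Finset.nodup_toList _
  have hm2 : ∀ x, x ∈ m ↔ x ≠ i := by simp [hm]
  have hk2 : ∀ x, x ∈ k ↔ x ≠ j := by simp [hk]
  have hlm : m.length = t - 1 := by simp [hm]
  have hlk : k.length = t - 1 := by simp [hk]
  have hlen : (m.map (a, ·) ++ (a, i) :: (b, j) :: (1, j) :: k.map (1, ·)).length = 2 * t + 1 := by
    simp [hlm, hlk]; omega
  rw [← hlen]
  refine length_le_mp _ _ (by simp) ?_ ?_
  · have h1 := hm1.map (f := fun x => (a, x)) (by intro x y; simp)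
    have h2 := hk1.map (f := fun x => ((1 : Fin 3), x)) (by intro x y; simp)
    simp [List.nodup_append, h1, h2, hm2, hk2, ha, hb, hab, Ne.symm ha, Ne.symm hb]
  · rw [List.isChain_append_cons_cons, List.isChain_cons_cons]
    refine ⟨List.Pairwise.isChain ?_, ?_, ?_, List.Pairwise.isChain ?_⟩
    · rw [List.pairwise_append]
      refine ⟨?_, by simp, ?_⟩
      · rw [List.pairwise_map]
        refine List.Pairwise.imp_of_mem ?_ hm1
        intro x y hx hy hxy
        rw [hm2] at hx hy
        simp [StepUp, addEdge_adj _ hne, gdeg_addEdge _ hne hn, gdeg_grid, *]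
      · simp only [List.mem_map, List.mem_singleton]
        rintro _ ⟨x, hx, rfl⟩ _ rfl
        rw [hm2] at hx
        simp [StepUp, addEdge_adj _ hne, gdeg_addEdge _ hne hn, gdeg_grid, *]
    · simp [StepUp, addEdge_adj _ hne, gdeg_addEdge _ hne hn, gdeg_grid, pathGraph_three_adj, *]
    · simp [StepUp, addEdge_adj _ hne, gdeg_addEdge _ hne hn, gdeg_grid, pathGraph_three_adj, *]
    · rw [List.pairwise_cons]
      refine ⟨?_, ?_⟩
      · simp only [List.mem_map]
        rintro _ ⟨x, hx, rfl⟩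
        rw [hk2] at hx
        simp [StepUp, addEdge_adj _ hne, gdeg_addEdge _ hne hn, gdeg_grid, *,
          Ne.symm ha, Ne.symm hb, Ne.symm hx]
      · rw [List.pairwise_map]
        refine hk1.imp ?_
        intro x y hxy
        simp [StepUp, addEdge_adj _ hne, gdeg_addEdge _ hne hn, gdeg_grid, *,
          Ne.symm ha, Ne.symm hb]

/-- Here `c` is the outer layer not containing the end `(a, i)` of the new edge. It is traversed
first in the order `j, i, …`, so that its last vertex lies below a middle vertex other than
`(1, j)`; the middle layer is then traversed in the reverse order, which makes it end at
`(1, i)`. -/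
lemma le_mp_middle {t : ℕ} {a : Fin 3} (ha : a ≠ 1) {i j : Fin t} (hij : i ≠ j) :
    2 * t + 1 ≤ mp (addEdge (Grid t) (a, i) (1, j)) := by
  obtain ⟨c, hc, hca⟩ : ∃ c : Fin 3, c ≠ 1 ∧ c ≠ a := by revert a; decide
  have hne : ((a, i) : Fin 3 × Fin t) ≠ (1, j) := by simp [ha]
  have hn : ¬ (Grid t).Adj (a, i) (1, j) := by simp [pathGraph_three_adj, ha, hij]
  obtain ⟨m, hm1, hm2, hlm⟩ : ∃ m : List (Fin t), (j :: i :: m).Nodup ∧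
      (∀ x, x ∈ m ↔ x ≠ i ∧ x ≠ j) ∧ m.length + 2 = t := by
    refine ⟨((Finset.univ.erase j).erase i).toList, ?_, by simp, ?_⟩
    · simp [Finset.nodup_toList, hij.symm]
    · have := Fintype.one_lt_card_iff.2 ⟨i, j, hij⟩
      rw [Fintype.card_fin] at this
      rw [Finset.length_toList, Finset.card_erase_of_mem (by simp [hij]),
        Finset.card_erase_of_mem (by simp), Finset.card_univ, Fintype.card_fin]
      omega
  have hm3 : (i :: m).Nodup := (List.nodup_cons.1 hm1).2
  have hm4 : ∀ x ∈ i :: m, x ≠ j := by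
    rintro x hx rfl; exact (List.nodup_cons.1 hm1).1 hx
  have hlen : ((j :: i :: m).map (c, ·) ++
      ((i :: m).reverse.map (1, ·) ++ [(a, i), (1, j)])).length = 2 * t + 1 := by
    simp; omega
  rw [← hlen]
  refine length_le_mp _ _ (by simp) ?_ ?_
  · have h1 := hm1.map (f := fun x => (c, x)) (by intro x y; simp)
    have h2 := (List.nodup_reverse.2 hm3).map (f := fun x => ((1 : Fin 3), x)) (by intro x y; simp)
    rw [List.nodup_append, List.nodup_append]
    refine ⟨h1, ⟨h2, by simp [ha], ?_⟩, ?_⟩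
    · simp only [List.mem_map, List.mem_reverse]
      rintro _ ⟨x, hx, rfl⟩ y hy
      have := hm4 x hx
      simp only [List.mem_cons, List.not_mem_nil, or_false] at hy
      rcases hy with rfl | rfl
      · simp [Ne.symm ha]
      · simp [this]
    · simp only [List.mem_map, List.mem_append]
      rintro _ ⟨x, hx, rfl⟩ y (⟨z, -, rfl⟩ | hy)
      · simp [hc]
      · simp only [List.mem_cons, List.not_mem_nil, or_false] at hy
        rcases hy with rfl | rfl <;> simp [hc, hca]
  · rw [List.isChain_append, List.isChain_append]
    refine ⟨List.Pairwise.isChain ?_, ⟨List.Pairwise.isChain ?_, ?_, ?_⟩, ?_⟩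
    · rw [List.pairwise_map]
      refine hm1.imp ?_
      intro x y hxy
      simp [StepUp, addEdge_adj _ hne, gdeg_addEdge _ hne hn, gdeg_grid, *]
    · rw [List.pairwise_map]
      refine List.Pairwise.imp_of_mem ?_ (List.nodup_reverse.2 hm3)
      intro x y hx hy hxy
      have hx' := hm4 x (List.mem_reverse.1 hx)
      have hy' := hm4 y (List.mem_reverse.1 hy)
      simp [StepUp, addEdge_adj _ hne, gdeg_addEdge _ hne hn, gdeg_grid, hxy, hx', hy',
        Ne.symm ha]
    · simp [StepUp, addEdge_adj _ hne, gdeg_addEdge _ hne hn, gdeg_grid, ha]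
    · simp [StepUp, addEdge_adj _ hne, gdeg_addEdge _ hne hn, gdeg_grid, pathGraph_three_adj, ha, hij,
        Ne.symm ha]
    · intro x hx y hy
      -- Both `x` and `y` lie over the last index of the list `i :: m`.
      obtain ⟨z, hz, rfl, rfl⟩ : ∃ z ∈ i :: m, x = (c, z) ∧ y = (1, z) := by
        refine ⟨(i :: m).getLast (by simp), List.getLast_mem _, ?_, ?_⟩
        · simp only [List.getLast?_map, List.getLast?_cons_cons] at hx
          rw [List.getLast?_eq_getLast_of_ne_nil (by simp)] at hx
          simpa [eq_comm] using hx
        · rw [List.head?_append_of_ne_nil _ (by simp), List.head?_map, List.head?_reverse,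
            List.getLast?_eq_getLast_of_ne_nil (by simp)] at hy
          simpa [eq_comm] using hy
      have hz' := hm4 z hz
      simp [StepUp, addEdge_adj _ hne, gdeg_addEdge _ hne hn, gdeg_grid, pathGraph_three_adj, hc, hca, hz',
        Ne.symm ha]

theorem stmt_6 (t : ℕ) (ht : 1 ≤ t) :
    (∀ u v : Fin 3 × Fin t, u ≠ v → ¬ (pathGraph 3 □ (⊤ : SimpleGraph (Fin t))).Adj u v →
      2 * t + 1 ≤ mp (addEdge (pathGraph 3 □ (⊤ : SimpleGraph (Fin t))) u v)) ∧
    KSaturated (2 * t + 1) (pathGraph 3 □ (⊤ : SimpleGraph (Fin t))) := by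
  have key : ∀ u v : Fin 3 × Fin t, u ≠ v → ¬ (Grid t).Adj u v →
      2 * t + 1 ≤ mp (addEdge (Grid t) u v) := by
    rintro ⟨a, i⟩ ⟨b, j⟩ hne hn
    simp only [grid_adj] at hn
    by_cases hab : a = b
    · subst hab
      exact absurd (Or.inr ⟨fun h => hne (by rw [h]), rfl⟩) hn
    by_cases ha : a = 1
    · subst ha
      rw [addEdge_comm]
      exact le_mp_middle (Ne.symm hab) fun h => hn (Or.inl ⟨Or.inl ⟨rfl, Ne.symm hab⟩, h.symm⟩)
    by_cases hb : b = 1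
    · subst hb
      exact le_mp_middle ha fun h => hn (Or.inl ⟨Or.inr ⟨ha, rfl⟩, h⟩)
    · exact le_mp_outer ha hb hab i j
  exact ⟨key, Nat.lt_succ_of_le (mp_grid_le ht), key⟩
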